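/- arXiv:1912.07345 — 3 statements merged into one kernel-verified Lean document; each statement's English description precedes it below -/
import Mathlib

section
/- For every Λ ≥ 1 there exist constants c > 0, Λ' > 0 and ν₀ ∈ (0,1), depending only on Λ, with the following property: if ν ∈ (0, ν₀] and Q : [0,∞) → (0,∞) is a differentiable function satisfying Q'(t) ≤ Λ ( Q(t)(1 + log(1 + 1/Q(t))) + ν ) for all t ≥ 0, together with the smallness condition Q(0)(1 + log(1 + 1/Q(0))) < ν, then Q(t) ≤ Λ' ( Q(0) + ν t ) for all t ∈ [0, c/log(1/ν)]. -/
open Real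

/-!
Write `G s = s (1 + log (1 + 1 / s))` and compare `Q` with the line `x ↦ Q 0 + 3 Λ ν x`. Where `Q`
meets the line, subadditivity of `G` gives `G (Q x) ≤ G (Q 0) + G (3 Λ ν x)`. The first term is
less than `ν` by assumption. For `x ≤ 1 / (24 Λ log (1 / ν))` the second is at most
`G (ν / (8 log (1 / ν))) ≤ ν`, because the logarithm in `G` costs only a factor of order
`log (1 / ν)`. Hence `Q' < 3 Λ ν` at every such meeting point, and `Q` cannot cross the line.
-/

/-- The log-Lipschitz modulus `s ↦ s (1 + log (1 + 1 / s))` on `[0, ∞)`, the nonlinearity of the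
differential inequality. Its value at `s = 0` is `0`, the limit from the right. -/
noncomputable def logModulus (s : ℝ) : ℝ :=
  s * (1 + log (1 + 1 / s))

@[simp]
lemma logModulus_zero : logModulus 0 = 0 := by
  simp [logModulus]

lemma log_one_add_one_div_le_of_le {a b : ℝ} (ha : 0 < a) (hab : a ≤ b) :
    log (1 + 1 / b) ≤ log (1 + 1 / a) := by
  have hb : 0 < b := ha.trans_le hab
  gcongr

lemma logModulus_add_le {a b : ℝ} (ha : 0 ≤ a) (hb : 0 ≤ b) :
    logModulus (a + b) ≤ logModulus a + logModulus b := by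
  rcases ha.eq_or_lt with rfl | ha
  · simp
  rcases hb.eq_or_lt with rfl | hb
  · simp
  calc logModulus (a + b)
      = a * (1 + log (1 + 1 / (a + b))) + b * (1 + log (1 + 1 / (a + b))) := add_mul ..
    _ ≤ logModulus a + logModulus b := by
      unfold logModulus
      gcongr a * (1 + ?_) + b * (1 + ?_)
      · exact log_one_add_one_div_le_of_le ha (by linarith)
      · exact log_one_add_one_div_le_of_le hb (by linarith)

lemma mul_log_one_add_one_div_le_of_le {a b : ℝ} (ha : 0 < a) (hab : a ≤ b) :
    a * log (1 + 1 / a) ≤ b * log (1 + 1 / b) := by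
  have hb : 0 < b := ha.trans_le hab
  have bernoulli : 1 + 1 / a ≤ (1 + 1 / b) ^ (b / a) :=
    calc 1 + 1 / a = 1 + b / a * (1 / b) := by field_simp
      _ ≤ (1 + 1 / b) ^ (b / a) :=
        one_add_mul_self_le_rpow_one_add (by linarith [one_div_pos.2 hb]) ((one_le_div ha).2 hab)
  calc a * log (1 + 1 / a) ≤ a * log ((1 + 1 / b) ^ (b / a)) := by gcongr
    _ = b * log (1 + 1 / b) := by
      rw [log_rpow (by positivity)]
      field_simp

lemma monotoneOn_logModulus : MonotoneOn logModulus (Set.Ici 0) := by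
  intro a ha b _ hab
  rcases (Set.mem_Ici.1 ha).eq_or_lt with rfl | ha
  · have : 0 ≤ log (1 + 1 / b) := log_nonneg (le_add_of_nonneg_right (by positivity))
    rw [logModulus_zero]
    unfold logModulus
    positivity
  · unfold logModulus
    linarith [mul_log_one_add_one_div_le_of_le ha hab]

lemma one_le_log_one_div {ν : ℝ} (hν : 0 < ν) (hν₁ : ν ≤ exp (-1)) : 1 ≤ log (1 / ν) := by
  rw [one_div, log_inv]
  linarith [(log_le_iff_le_exp hν).2 hν₁]

lemma logModulus_div_log_le {ν : ℝ} (hν : 0 < ν) (hν₁ : ν ≤ exp (-1)) :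
    logModulus (ν / (8 * log (1 / ν))) ≤ ν := by
  have hL := one_le_log_one_div hν hν₁
  have one_le : 1 ≤ 1 / ν := by
    rw [one_le_div hν]
    exact hν₁.trans (exp_le_one_iff.2 (by norm_num))
  set L := log (1 / ν)
  have log_nine : log 9 ≤ 4 := by
    rw [show (9 : ℝ) = 3 ^ 2 by norm_num, log_pow, Nat.cast_ofNat]
    linarith [log_le_sub_one_of_pos (show (0 : ℝ) < 3 by norm_num)]
  have log_le : log (1 + 1 / (ν / (8 * L))) ≤ 3 + 2 * L :=
    calc log (1 + 1 / (ν / (8 * L))) = log (1 + 8 * (L * (1 / ν))) := by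
          congr 1
          field_simp
      _ ≤ log (9 * (L * (1 / ν))) := by
          gcongr
          linarith [one_le_mul_of_one_le_of_one_le hL one_le]
      _ = log 9 + (log L + L) := by
          rw [log_mul (by norm_num) (by positivity), log_mul (by positivity) (by positivity)]
      _ ≤ 3 + 2 * L := by linarith [log_le_sub_one_of_pos (show 0 < L by linarith)]
  calc logModulus (ν / (8 * L)) ≤ ν / (8 * L) * (8 * L) := by
        unfold logModulus
        gcongr
        linarith
    _ = ν := div_mul_cancel₀ ν (by positivity)

lemma le_add_mul_of_deriv_right_lt_of_eq {f f' : ℝ → ℝ} {a b K : ℝ} (hab : a ≤ b)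
    (hf : ContinuousOn f (Set.Icc a b))
    (hf' : ∀ x ∈ Set.Ico a b, HasDerivWithinAt f (f' x) (Set.Ici x) x)
    (hlt : ∀ x ∈ Set.Ico a b, f x = f a + K * (x - a) → f' x < K) :
    f b ≤ f a + K * (b - a) := by
  have line_deriv (x : ℝ) : HasDerivAt (fun y ↦ f a + K * (y - a)) K x := by
    simpa using (((hasDerivAt_id x).sub_const a).const_mul K).const_add (f a)
  exact image_le_of_deriv_right_lt_deriv_boundary hf hf' (by simp) line_deriv hlt
    (Set.right_mem_Icc.2 hab)

theorem Q_bound_short_time_general {Λ ν t : ℝ} {Q Q' : ℝ → ℝ} (hΛ : 0 < Λ) (hν : 0 < ν)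
    (hν₁ : ν ≤ exp (-1)) (ht : 0 ≤ t) (ht_le : t ≤ 1 / (24 * Λ) / log (1 / ν))
    (hQ : ContinuousOn Q (Set.Icc 0 t))
    (hQ' : ∀ x ∈ Set.Ico 0 t, HasDerivWithinAt Q (Q' x) (Set.Ici x) x)
    (hQ'_le : ∀ x ∈ Set.Ico 0 t, 0 < Q x → Q' x ≤ Λ * (logModulus (Q x) + ν))
    (hQ₀ : 0 < Q 0) (hQ₀_small : logModulus (Q 0) < ν) :
    Q t ≤ Q 0 + 3 * Λ * ν * t := by
  suffices h : Q t ≤ Q 0 + 3 * Λ * ν * (t - 0) by simpa only [sub_zero] using h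
  refine le_add_mul_of_deriv_right_lt_of_eq ht hQ hQ' fun x hx meets ↦ ?_
  rw [sub_zero] at meets
  have hx₀ : 0 ≤ x := hx.1
  have hL : 0 < log (1 / ν) := one_pos.trans_le (one_le_log_one_div hν hν₁)
  have increment_le : 3 * Λ * ν * x ≤ ν / (8 * log (1 / ν)) :=
    calc 3 * Λ * ν * x ≤ 3 * Λ * ν * (1 / (24 * Λ) / log (1 / ν)) := by
          gcongr
          exact hx.2.le.trans ht_le
      _ = ν / (8 * log (1 / ν)) := by
          field_simp
          norm_num
  have modulus_increment_le : logModulus (3 * Λ * ν * x) ≤ ν :=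
    (monotoneOn_logModulus (Set.mem_Ici.2 (by positivity)) (Set.mem_Ici.2 (by positivity))
      increment_le).trans (logModulus_div_log_le hν hν₁)
  have modulus_lt : logModulus (Q x) < 2 * ν := by
    rw [meets]
    linarith [logModulus_add_le hQ₀.le (show 0 ≤ 3 * Λ * ν * x by positivity)]
  calc Q' x ≤ Λ * (logModulus (Q x) + ν) := hQ'_le x hx (meets ▸ by positivity)
    _ < Λ * (2 * ν + ν) := by gcongr
    _ = 3 * Λ * ν := by ring

/-- **Lemma 2, short-time part**: if a positive differentiable `Q` satisfies
`Q' ≤ Λ(Q(1 + log(1 + 1/Q)) + ν)` and `Q(0)(1 + log(1 + 1/Q(0))) < ν`, then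
`Q(t) ≤ Λ'(Q(0) + νt)` for all times `t ≤ c/log(1/ν)`. -/
theorem Q_bound_short_time (Λ : ℝ) (hΛ : 1 ≤ Λ) :
    ∃ c > (0 : ℝ), ∃ Λ' > (0 : ℝ), ∃ ν₀ : ℝ, 0 < ν₀ ∧ ν₀ < 1 ∧
      ∀ ν : ℝ, 0 < ν → ν ≤ ν₀ → ∀ Q : ℝ → ℝ,
        (∀ t ≥ (0 : ℝ), 0 < Q t) →
        (∀ t ≥ (0 : ℝ), DifferentiableAt ℝ Q t) →
        (∀ t ≥ (0 : ℝ), deriv Q t ≤ Λ * (Q t * (1 + Real.log (1 + 1 / Q t)) + ν)) →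
        Q 0 * (1 + Real.log (1 + 1 / Q 0)) < ν →
        ∀ t : ℝ, 0 ≤ t → t ≤ c / Real.log (1 / ν) → Q t ≤ Λ' * (Q 0 + ν * t) := by
  refine ⟨1 / (24 * Λ), by positivity, 3 * Λ, by positivity, exp (-1), exp_pos _,
    exp_lt_one_iff.2 (by norm_num), fun ν hν hν₁ Q hQ hQ_diff hQ'_le hQ₀_small t ht ht_le ↦ ?_⟩
  calc Q t ≤ Q 0 + 3 * Λ * ν * t :=
        Q_bound_short_time_general (by positivity) hν hν₁ ht ht_le
          (fun x hx ↦ (hQ_diff x hx.1).continuousAt.continuousWithinAt)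
          (fun x hx ↦ (hQ_diff x hx.1).hasDerivAt.hasDerivWithinAt)
          (fun x hx _ ↦ hQ'_le x hx.1) (hQ 0 le_rfl) hQ₀_small
    _ ≤ 3 * Λ * (Q 0 + ν * t) := by
        linarith [le_mul_of_one_le_left (hQ 0 le_rfl).le (show 1 ≤ 3 * Λ by linarith)]
end

section
/- Let η be a finite nonnegative measure on ℝ² × ℝ² with total mass M > 0, and suppose Q := ∬ |x − y|² dη(x,y) is finite and positive. Then ∬ |x − y|² log(1 + 1/|x − y|) dη(x,y) ≤ Q · log( 1 + √(M/Q) ). -/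
open MeasureTheory Real
open scoped ENNReal

noncomputable section

abbrev E2 : Type := EuclideanSpace ℝ (Fin 2)

/-!
Multiplying the tangent-line bound for `log (1 + ·)` at `a`, evaluated at `1 / r`, by `r ^ 2` gives
`r ^ 2 * log (1 + 1 / r) ≤ log (1 + a) * r ^ 2 + (r - a * r ^ 2) / (1 + a)`, without a singularity
at `r = 0`. Integrating it takes the place of Jensen's inequality for `s ↦ s * log (1 + 1 / s)`. At
`a = √(M / Q)` the integrated error term is nonpositive, because `∫ r ≤ √(M * Q) = a * Q` by
Cauchy–Schwarz.
-/

section Pointwise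

variable {a r t : ℝ}

theorem log_one_add_le_log_one_add_add_div (ha : -1 < a) (ht : -1 < t) :
    log (1 + t) ≤ log (1 + a) + (t - a) / (1 + a) := by
  have ha' : 0 < 1 + a := by linarith
  have ht' : 0 < 1 + t := by linarith
  have hlog := log_le_sub_one_of_pos (div_pos ht' ha')
  rw [log_div ht'.ne' ha'.ne'] at hlog
  have hslope : (t - a) / (1 + a) = (1 + t) / (1 + a) - 1 := by
    field_simp
    ring
  linarith

theorem sq_mul_log_one_add_one_div_nonneg (hr : 0 ≤ r) : 0 ≤ r ^ 2 * log (1 + 1 / r) :=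
  mul_nonneg (sq_nonneg r) (log_nonneg (le_add_of_nonneg_right (one_div_nonneg.2 hr)))

theorem sq_mul_log_one_add_one_div_le (ha : -1 < a) (hr : 0 ≤ r) :
    r ^ 2 * log (1 + 1 / r) ≤ log (1 + a) * r ^ 2 + (r - a * r ^ 2) / (1 + a) := by
  rcases hr.eq_or_lt with rfl | hr
  · simp
  · have hinv : -1 < 1 / r := neg_one_lt_zero.trans (one_div_pos.2 hr)
    calc r ^ 2 * log (1 + 1 / r)
        ≤ r ^ 2 * (log (1 + a) + (1 / r - a) / (1 + a)) := by
          gcongr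
          exact log_one_add_le_log_one_add_add_div ha hinv
      _ = log (1 + a) * r ^ 2 + (r - a * r ^ 2) / (1 + a) := by field_simp

theorem sq_mul_log_one_add_one_div_le_self (hr : 0 ≤ r) : r ^ 2 * log (1 + 1 / r) ≤ r := by
  simpa using sq_mul_log_one_add_one_div_le neg_one_lt_zero hr

end Pointwise

section Integral

variable {Ω : Type*} [MeasurableSpace Ω] {μ : Measure Ω} {f : Ω → ℝ}

theorem integrable_sq_mul_log_one_add_one_div (hf : Integrable f μ) (hf₀ : 0 ≤ᵐ[μ] f) :
    Integrable (fun x ↦ f x ^ 2 * log (1 + 1 / f x)) μ := by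
  have hmeas : AEMeasurable f μ := hf.aemeasurable
  refine hf.mono' (AEMeasurable.aestronglyMeasurable (by fun_prop)) ?_
  filter_upwards [hf₀] with x hx
  rw [norm_of_nonneg (sq_mul_log_one_add_one_div_nonneg hx)]
  exact sq_mul_log_one_add_one_div_le_self hx

theorem integral_sq_mul_log_one_add_one_div_le {a : ℝ} (ha : -1 < a) (hf : Integrable f μ)
    (hf_sq : Integrable (fun x ↦ f x ^ 2) μ) (hf₀ : 0 ≤ᵐ[μ] f) :
    ∫ x, f x ^ 2 * log (1 + 1 / f x) ∂μ
      ≤ log (1 + a) * ∫ x, f x ^ 2 ∂μ + (∫ x, f x ∂μ - a * ∫ x, f x ^ 2 ∂μ) / (1 + a) := by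
  have hmain : Integrable (fun x ↦ log (1 + a) * f x ^ 2) μ := hf_sq.const_mul _
  have herror : Integrable (fun x ↦ (f x - a * f x ^ 2) / (1 + a)) μ :=
    (hf.sub (hf_sq.const_mul a)).div_const _
  calc ∫ x, f x ^ 2 * log (1 + 1 / f x) ∂μ
      ≤ ∫ x, (log (1 + a) * f x ^ 2 + (f x - a * f x ^ 2) / (1 + a)) ∂μ :=
        integral_mono_ae (integrable_sq_mul_log_one_add_one_div hf hf₀) (hmain.add herror)
          (hf₀.mono fun _ hx ↦ sq_mul_log_one_add_one_div_le ha hx)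
    _ = log (1 + a) * ∫ x, f x ^ 2 ∂μ + (∫ x, f x ∂μ - a * ∫ x, f x ^ 2 ∂μ) / (1 + a) := by
        rw [integral_add hmain herror, integral_div, integral_sub hf (hf_sq.const_mul a),
          integral_const_mul, integral_const_mul]

theorem sq_integral_le_measureReal_univ_mul_integral_sq [IsFiniteMeasure μ] (hf : MemLp f 2 μ) :
    (∫ x, f x ∂μ) ^ 2 ≤ μ.real Set.univ * ∫ x, f x ^ 2 ∂μ := by
  rcases eq_zero_or_neZero μ with rfl | hμ
  · simp
  have hmass : 0 < μ.real Set.univ := measureReal_univ_pos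
  have hJensen : (⨍ x, f x ∂μ) ^ 2 ≤ ⨍ x, f x ^ 2 ∂μ :=
    even_two.convexOn_pow.map_average_le (continuous_pow 2).continuousOn isClosed_univ
      (by simp) (hf.integrable one_le_two) hf.integrable_sq
  rw [average_eq, average_eq, smul_eq_mul, smul_eq_mul] at hJensen
  field_simp at hJensen
  exact hJensen

theorem integral_le_sqrt_div_mul_integral_sq [IsFiniteMeasure μ] (hf : MemLp f 2 μ)
    (hQ : 0 < ∫ x, f x ^ 2 ∂μ) :
    ∫ x, f x ∂μ ≤ √(μ.real Set.univ / ∫ x, f x ^ 2 ∂μ) * ∫ x, f x ^ 2 ∂μ := by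
  refine le_of_sq_le_sq ?_ (by positivity)
  rw [mul_pow, sq_sqrt (by positivity)]
  calc (∫ x, f x ∂μ) ^ 2
      ≤ μ.real Set.univ * ∫ x, f x ^ 2 ∂μ := sq_integral_le_measureReal_univ_mul_integral_sq hf
    _ = μ.real Set.univ / (∫ x, f x ^ 2 ∂μ) * (∫ x, f x ^ 2 ∂μ) ^ 2 := by field_simp

theorem log_moment_jensen_general [IsFiniteMeasure μ] (hf : MemLp f 2 μ) (hf₀ : 0 ≤ᵐ[μ] f)
    (hQ : 0 < ∫ x, f x ^ 2 ∂μ) :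
    ∫ x, f x ^ 2 * log (1 + 1 / f x) ∂μ
      ≤ (∫ x, f x ^ 2 ∂μ) * log (1 + √(μ.real Set.univ / ∫ x, f x ^ 2 ∂μ)) := by
  set Q := ∫ x, f x ^ 2 ∂μ
  set a := √(μ.real Set.univ / Q)
  have ha : 0 ≤ a := sqrt_nonneg _
  have hCauchySchwarz : ∫ x, f x ∂μ ≤ a * Q := integral_le_sqrt_div_mul_integral_sq hf hQ
  calc ∫ x, f x ^ 2 * log (1 + 1 / f x) ∂μ
      ≤ log (1 + a) * Q + (∫ x, f x ∂μ - a * Q) / (1 + a) :=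
        integral_sq_mul_log_one_add_one_div_le (by linarith) (hf.integrable one_le_two)
          hf.integrable_sq hf₀
    _ ≤ log (1 + a) * Q :=
        add_le_of_nonpos_right
          (div_nonpos_of_nonpos_of_nonneg (sub_nonpos.2 hCauchySchwarz) (by positivity))
    _ = Q * log (1 + a) := mul_comm _ _

end Integral

/-- **Jensen-type estimate for the logarithmic moment**: if `η` is a finite nonnegative
measure on `ℝ² × ℝ²` of total mass `M > 0` with finite positive quadratic cost
`Q = ∬ |x−y|² dη`, then `∬ |x−y|² log(1 + 1/|x−y|) dη ≤ Q log(1 + √(M/Q))`. -/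
theorem log_moment_jensen (η : Measure (E2 × E2)) (M Q : ℝ)
    (hmass : η Set.univ = ENNReal.ofReal M) (hM : 0 < M)
    (hQint : Integrable (fun p : E2 × E2 => ‖p.1 - p.2‖ ^ 2) η)
    (hQ : Q = ∫ p : E2 × E2, ‖p.1 - p.2‖ ^ 2 ∂η) (hQpos : 0 < Q)
    (hlogint : Integrable
      (fun p : E2 × E2 => ‖p.1 - p.2‖ ^ 2 * Real.log (1 + 1 / ‖p.1 - p.2‖)) η) :
    ∫ p : E2 × E2, ‖p.1 - p.2‖ ^ 2 * Real.log (1 + 1 / ‖p.1 - p.2‖) ∂η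
      ≤ Q * Real.log (1 + Real.sqrt (M / Q)) := by
  have : IsFiniteMeasure η := ⟨hmass ▸ ENNReal.ofReal_lt_top⟩
  have hmass_real : η.real Set.univ = M := by
    rw [Measure.real, hmass, ENNReal.toReal_ofReal hM.le]
  have hL2 : MemLp (fun p : E2 × E2 ↦ ‖p.1 - p.2‖) 2 η :=
    (memLp_two_iff_integrable_sq (by fun_prop)).2 hQint
  subst hQ hmass_real
  exact log_moment_jensen_general hL2 (ae_of_all _ fun _ ↦ norm_nonneg _) hQpos
end
end

section
/- Let C > 0, let t₁ ≤ T be real numbers, and let Q : [t₁, T] → (0,1) be differentiable with Q'(t) ≤ C Q(t) ( 1 + log(1/Q(t)) ) for all t ∈ [t₁, T]. Then for all t ∈ [t₁, T], Q(t) ≤ e^{1 − exp(−C(t − t₁))} · Q(t₁)^{exp(−C(t − t₁))}; in particular Q(t) ≤ e · Q(t₁)^{exp(−C(t − t₁))}. -/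
open Real

/-!
Since `Q' / Q ≤ C (1 - log Q)`, the function `log Q - 1` satisfies the linear inequality
`f' ≤ -C f`, so Grönwall's inequality gives
`log (Q t) - 1 ≤ (log (Q t₁) - 1) exp (-C (t - t₁))`. Exponentiating yields the claim.
-/

open Set

theorem le_mul_exp_of_hasDerivWithinAt_le_mul {f f' : ℝ → ℝ} {K a b : ℝ}
    (hf : ContinuousOn f (Icc a b))
    (hf' : ∀ t ∈ Ico a b, HasDerivWithinAt f (f' t) (Ici t) t)
    (hle : ∀ t ∈ Ico a b, f' t ≤ K * f t) {t : ℝ} (ht : t ∈ Icc a b) :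
    f t ≤ f a * exp (K * (t - a)) := by
  rw [← gronwallBound_ε0]
  exact le_gronwallBound_of_liminf_deriv_right_le hf
    (fun s hs _ hr => (hf' s hs).liminf_right_slope_le hr) le_rfl
    (by simpa only [add_zero] using hle) t ht

theorem div_le_neg_mul_log_sub_one {C q q' : ℝ} (hq : 0 < q)
    (hle : q' ≤ C * q * (1 + log (1 / q))) : q' / q ≤ -C * (log q - 1) := by
  rw [one_div, log_inv] at hle
  rw [div_le_iff₀ hq]
  linarith

theorem le_exp_one_sub_mul_rpow_of_log_sub_one_le {p q r : ℝ} (hp : 0 < p) (hq : 0 < q)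
    (hle : log q - 1 ≤ (log p - 1) * r) : q ≤ exp (1 - r) * p ^ r := by
  rw [rpow_def_of_pos hp, ← exp_add, ← log_le_iff_le_exp hq]
  linarith

section Osgood

variable {C t₁ T : ℝ} {Q Q' : ℝ → ℝ}

theorem log_sub_one_le_of_osgood (hQ : ContinuousOn Q (Icc t₁ T))
    (hQ' : ∀ t ∈ Ico t₁ T, HasDerivWithinAt Q (Q' t) (Ici t) t)
    (hpos : ∀ t ∈ Icc t₁ T, 0 < Q t)
    (hineq : ∀ t ∈ Ico t₁ T, Q' t ≤ C * Q t * (1 + log (1 / Q t)))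
    {t : ℝ} (ht : t ∈ Icc t₁ T) :
    log (Q t) - 1 ≤ (log (Q t₁) - 1) * exp (-C * (t - t₁)) := by
  have hpos' : ∀ s ∈ Ico t₁ T, 0 < Q s := fun s hs => hpos s (Ico_subset_Icc_self hs)
  have hcont : ContinuousOn (fun s => log (Q s) - 1) (Icc t₁ T) :=
    (hQ.log fun s hs => (hpos s hs).ne').sub continuousOn_const
  have hderiv : ∀ s ∈ Ico t₁ T,
      HasDerivWithinAt (fun s => log (Q s) - 1) (Q' s / Q s) (Ici s) s :=
    fun s hs => ((hQ' s hs).log (hpos' s hs).ne').sub_const 1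
  exact le_mul_exp_of_hasDerivWithinAt_le_mul hcont hderiv
    (fun s hs => div_le_neg_mul_log_sub_one (hpos' s hs) (hineq s hs)) ht

theorem osgood_integration_general (hQ : ContinuousOn Q (Icc t₁ T))
    (hQ' : ∀ t ∈ Ico t₁ T, HasDerivWithinAt Q (Q' t) (Ici t) t)
    (hpos : ∀ t ∈ Icc t₁ T, 0 < Q t)
    (hineq : ∀ t ∈ Ico t₁ T, Q' t ≤ C * Q t * (1 + log (1 / Q t)))
    {t : ℝ} (ht : t ∈ Icc t₁ T) :
    Q t ≤ exp (1 - exp (-C * (t - t₁))) * Q t₁ ^ exp (-C * (t - t₁)) ∧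
      Q t ≤ exp 1 * Q t₁ ^ exp (-C * (t - t₁)) := by
  have hpos₁ : 0 < Q t₁ := hpos t₁ (left_mem_Icc.2 (ht.1.trans ht.2))
  have hsharp : Q t ≤ exp (1 - exp (-C * (t - t₁))) * Q t₁ ^ exp (-C * (t - t₁)) :=
    le_exp_one_sub_mul_rpow_of_log_sub_one_le hpos₁ (hpos t ht)
      (log_sub_one_le_of_osgood hQ hQ' hpos hineq ht)
  refine ⟨hsharp, hsharp.trans ?_⟩
  gcongr
  exact sub_le_self 1 (exp_pos _).le

end Osgood

/-- **Osgood-type integration of the differential inequality**: if `Q : [t₁, T] → (0,1)` is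
differentiable with `Q' ≤ C Q (1 + log(1/Q))`, then
`Q(t) ≤ e^{1 − exp(−C(t−t₁))} Q(t₁)^{exp(−C(t−t₁))} ≤ e Q(t₁)^{exp(−C(t−t₁))}`. -/
theorem osgood_integration (C : ℝ) (hC : 0 < C) (t₁ T : ℝ) (ht : t₁ ≤ T) (Q : ℝ → ℝ)
    (hQ0 : ∀ t, t₁ ≤ t → t ≤ T → 0 < Q t) (hQ1 : ∀ t, t₁ ≤ t → t ≤ T → Q t < 1)
    (hdiff : ∀ t, t₁ ≤ t → t ≤ T → DifferentiableAt ℝ Q t)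
    (hineq : ∀ t, t₁ ≤ t → t ≤ T → deriv Q t ≤ C * Q t * (1 + Real.log (1 / Q t))) :
    ∀ t, t₁ ≤ t → t ≤ T →
      Q t ≤ Real.exp (1 - Real.exp (-C * (t - t₁))) * Q t₁ ^ Real.exp (-C * (t - t₁)) ∧
      Q t ≤ Real.exp 1 * Q t₁ ^ Real.exp (-C * (t - t₁)) :=
  fun _ h₁ h₂ => osgood_integration_general
    (fun s hs => (hdiff s hs.1 hs.2).continuousAt.continuousWithinAt)
    (fun s hs => (hdiff s hs.1 hs.2.le).hasDerivAt.hasDerivWithinAt)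
    (fun s hs => hQ0 s hs.1 hs.2) (fun s hs => hineq s hs.1 hs.2.le) ⟨h₁, h₂⟩
end
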